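/- Let σ^+ be the one-sided full shift on Σ_M^+ = {1, …, M}^{ℕ∪{0}}. If A ⊂ Σ_M^+ satisfies h(σ^+, A) < h(σ^+), then h(σ^+, I^+_{σ^+|Σ_M^+}(A)) = h(σ^+). -/

import Mathlib

open Set Filter Topology MeasureTheory
open scoped NNReal ENNReal

noncomputable section

namespace ExceptionalSets

variable {X : Type*}

/-- The forward orbit `{fᵏ(x) : k ≥ 0}`. -/
def forwardOrbit (f : X → X) (x : X) : Set X := Set.range fun n : ℕ => f^[n] x

/-- The ω-limit set of `x`: the set of limit points of the forward orbit of `x`. -/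
def omegaSet [TopologicalSpace X] (f : X → X) (x : X) : Set X :=
  {y | ∃ φ : ℕ → ℕ, StrictMono φ ∧ Tendsto (fun n => f^[φ n] x) atTop (𝓝 y)}

/-- The limit `A`-exceptional set `I⁺_{f|W}(A)`. -/
def limitExc [TopologicalSpace X] (f : X → X) (W A : Set X) : Set X :=
  {x ∈ W | omegaSet f x ∩ A = ∅}

/-- The `A`-exceptional set `E⁺_{f|W}(A)`. -/
def exc [TopologicalSpace X] (f : X → X) (W A : Set X) : Set X :=
  {x ∈ W | closure (forwardOrbit f x) ∩ A = ∅}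

/-- For `U ⊆ X`, the largest `n` (possibly `∞`) such that `fᵏ(U ∩ W)` is contained in
some element of the finite collection `𝒜` for all `k < n`: Bowen's `n_{f,𝒜}(U)`. -/
def itinIndex [TopologicalSpace X] (f : X → X) (W : Set X) (𝒜 : Finset (Set X))
    (U : Set X) : ℕ∞ :=
  sSup {n : ℕ∞ | ∀ k : ℕ, (k : ℕ∞) < n → ∃ A ∈ 𝒜, f^[k] '' (U ∩ W) ⊆ A}

/-- The weight `e^{-d·n} ∈ ℝ≥0∞` (for `d ≥ 0`). -/
def expWeight (d : ℝ) (n : ℕ∞) : ℝ≥0∞ :=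
  ⨅ (k : ℕ) (_ : (k : ℕ∞) ≤ n), ENNReal.ofReal (Real.exp (-(d * k)))

/-- Bowen's outer measure `m_{𝒜,d}(Y)` for the dynamics of `f` on `W`. -/
def bowenM [TopologicalSpace X] (f : X → X) (W : Set X) (𝒜 : Finset (Set X)) (d : ℝ)
    (Y : Set X) : ℝ≥0∞ :=
  ⨆ N : ℕ, ⨅ (𝒰 : ℕ → Set X)
    (_ : (∀ i, IsOpen (𝒰 i)) ∧ Y ⊆ (⋃ i, 𝒰 i) ∧ ∀ i, (N : ℕ∞) ≤ itinIndex f W 𝒜 (𝒰 i)),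
    ∑' i, expWeight d (itinIndex f W 𝒜 (𝒰 i))

/-- The critical value of `d ↦ m_{𝒜,d}(Y)`. -/
def entropyCover [TopologicalSpace X] (f : X → X) (W : Set X) (𝒜 : Finset (Set X))
    (Y : Set X) : ℝ :=
  sInf {d : ℝ | 0 ≤ d ∧ bowenM f W 𝒜 d Y = 0}

/-- Bowen's topological entropy `h(f|_W, Y)` of `f` on the (not necessarily compact or
invariant) subset `Y` of `W`, defined via finite open covers of `W`. -/
def entropyOn [TopologicalSpace X] (f : X → X) (W Y : Set X) : ℝ :=
  ⨆ (𝒜 : Finset (Set X)) (_ : (∀ A ∈ 𝒜, IsOpen A) ∧ W ⊆ ⋃₀ ↑𝒜), entropyCover f W 𝒜 Y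

/-- The one-sided full shift on `Σ_m^+ = {1,…,m}^{ℕ∪{0}}`. -/
def oneShift (m : ℕ) : (ℕ → Fin m) → (ℕ → Fin m) := fun x n => x (n + 1)

section ForbiddenWords

variable {α ι : Type*} [Fintype α]

/-- The words of length `n` in which no forbidden word `w i` occurs. -/
def avoidingWords (w : ι → List α) (n : ℕ) : Finset (List α) := by
  classical
  exact (List.finite_length_eq α n).toFinset.filter fun l => ∀ i, ¬ w i <:+: l

lemma mem_avoidingWords {w : ι → List α} {n : ℕ} {l : List α} :
    l ∈ avoidingWords w n ↔ l.length = n ∧ ∀ i, ¬ w i <:+: l := by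
  classical
  simp [avoidingWords]

/-- Extending avoiding words on the left by one letter produces avoiding words, except for those
extensions that start with a forbidden word. -/
lemma card_mul_card_avoidingWords_le {w : ι → List α} (hw : ∀ i, w i ≠ []) (n : ℕ) :
    ∃ S : Finset ι, (∀ i ∈ S, (w i).length ≤ n + 1) ∧
      Fintype.card α * (avoidingWords w n).card ≤
        (avoidingWords w (n + 1)).card +
          ∑ i ∈ S, (avoidingWords w (n + 1 - (w i).length)).card := by
  classical
  set E : Finset (List α) :=
    (Finset.univ ×ˢ avoidingWords w n).image fun p : α × List α => p.1 :: p.2 with hE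
  have hEcard : E.card = Fintype.card α * (avoidingWords w n).card := by
    rw [hE, Finset.card_image_of_injective, Finset.card_product, Finset.card_univ]
    rintro ⟨a, l⟩ ⟨b, l'⟩ h
    simpa using h
  have key : ∀ u ∈ E \ avoidingWords w (n + 1), ∃ i, (w i).length ≤ n + 1 ∧
      u ∈ (avoidingWords w (n + 1 - (w i).length)).image (w i ++ ·) := by
    intro u hu
    rw [Finset.mem_sdiff, hE, Finset.mem_image] at hu
    obtain ⟨⟨⟨a, l⟩, hl, rfl⟩, hbad⟩ := hu
    simp only [Finset.mem_product, Finset.mem_univ, true_and, mem_avoidingWords] at hl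
    obtain ⟨hlen, hav⟩ := hl
    simp only [mem_avoidingWords, List.length_cons, hlen, true_and, not_forall, not_not] at hbad
    obtain ⟨i, hi⟩ := hbad
    rcases List.infix_cons_iff.1 hi with hpre | hin
    · obtain ⟨r, hr⟩ := hpre
      obtain ⟨b, t, hbt⟩ := List.exists_cons_of_ne_nil (hw i)
      have hlr : t ++ r = l := by
        rw [hbt] at hr
        simpa using (List.cons.inj hr).2
      have hlens : (w i).length + r.length = n + 1 := by
        have := congrArg List.length hr
        simpa [hlen] using this
      refine ⟨i, by omega, Finset.mem_image.2 ⟨r, mem_avoidingWords.2 ⟨by omega, ?_⟩, hr⟩⟩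
      intro j hj
      exact hav j (hj.trans (hlr ▸ (List.suffix_append t r).isInfix))
    · exact absurd hin (hav i)
  choose c hc using key
  refine ⟨(E \ avoidingWords w (n + 1)).attach.image fun u => c u.1 u.2, ?_, ?_⟩
  · intro i hi
    obtain ⟨u, -, rfl⟩ := Finset.mem_image.1 hi
    exact (hc u.1 u.2).1
  · rw [← hEcard]
    have hsub : E ⊆ avoidingWords w (n + 1) ∪
        ((E \ avoidingWords w (n + 1)).attach.image fun u => c u.1 u.2).biUnion fun i =>
          (avoidingWords w (n + 1 - (w i).length)).image (w i ++ ·) := by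
      intro u hu
      by_cases h : u ∈ avoidingWords w (n + 1)
      · exact Finset.mem_union_left _ h
      · have hu' := Finset.mem_sdiff.2 ⟨hu, h⟩
        exact Finset.mem_union_right _ (Finset.mem_biUnion.2
          ⟨c u hu', Finset.mem_image.2 ⟨⟨u, hu'⟩, Finset.mem_attach _ _, rfl⟩, (hc u hu').2⟩)
    refine (Finset.card_le_card hsub).trans ((Finset.card_union_le _ _).trans ?_)
    gcongr
    exact Finset.card_biUnion_le.trans (Finset.sum_le_sum fun i _ => Finset.card_image_le)

/-- If the forbidden words are sufficiently sparse, the number of avoiding words grows at least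
by the factor `β` with each letter. -/
lemma mul_card_avoidingWords_le {w : ι → List α} (hw : ∀ i, w i ≠ []) {β : ℝ} (hβ : 0 < β)
    (hsum : ∀ S : Finset ι, ∑ i ∈ S, (β ^ (w i).length)⁻¹ ≤ Fintype.card α / β - 1) (n : ℕ) :
    β * (avoidingWords w n).card ≤ (avoidingWords w (n + 1)).card := by
  induction n using Nat.strong_induction_on with
  | _ n ih =>
    obtain ⟨S, hS, hcard⟩ := card_mul_card_avoidingWords_le hw n
    have hgrow : ∀ k ≤ n, β ^ k * (avoidingWords w (n - k)).card ≤ (avoidingWords w n).card := by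
      intro k
      induction k with
      | zero => simp
      | succ k ihk =>
        intro hk
        have h1 := ih (n - (k + 1)) (by omega)
        rw [show n - (k + 1) + 1 = n - k by omega] at h1
        calc β ^ (k + 1) * ((avoidingWords w (n - (k + 1))).card : ℝ)
            = β ^ k * (β * (avoidingWords w (n - (k + 1))).card) := by ring
          _ ≤ β ^ k * (avoidingWords w (n - k)).card := by gcongr
          _ ≤ _ := ihk (by omega)
    have hterm : ∀ i ∈ S, ((avoidingWords w (n + 1 - (w i).length)).card : ℝ) ≤
        (β ^ (w i).length)⁻¹ * (β * (avoidingWords w n).card) := by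
      intro i hi
      have hpos : 0 < (w i).length := List.length_pos_iff.2 (hw i)
      obtain ⟨k, hk⟩ : ∃ k, (w i).length = k + 1 := ⟨(w i).length - 1, by omega⟩
      have hle := hS i hi
      have := hgrow k (by omega)
      rw [hk, show n + 1 - (k + 1) = n - k by omega, le_inv_mul_iff₀ (by positivity)]
      calc β ^ (k + 1) * ((avoidingWords w (n - k)).card : ℝ)
          = β * (β ^ k * (avoidingWords w (n - k)).card) := by ring
        _ ≤ _ := by gcongr
    have hcard' : (Fintype.card α : ℝ) * (avoidingWords w n).card ≤
        (avoidingWords w (n + 1)).card +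
          ∑ i ∈ S, ((avoidingWords w (n + 1 - (w i).length)).card : ℝ) := by
      exact_mod_cast hcard
    have hS' : ∑ i ∈ S, ((avoidingWords w (n + 1 - (w i).length)).card : ℝ) ≤
        (Fintype.card α / β - 1) * (β * (avoidingWords w n).card) := by
      refine (Finset.sum_le_sum hterm).trans ?_
      rw [← Finset.sum_mul]
      gcongr
      exact hsum S
    have : (Fintype.card α / β - 1) * (β * ((avoidingWords w n).card : ℝ)) =
        Fintype.card α * (avoidingWords w n).card - β * (avoidingWords w n).card := by
      field_simp
    linarith

lemma avoidingWords_nonempty {w : ι → List α} (hw : ∀ i, w i ≠ []) {β : ℝ} (hβ : 0 < β)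
    (hsum : ∀ S : Finset ι, ∑ i ∈ S, (β ^ (w i).length)⁻¹ ≤ Fintype.card α / β - 1) (n : ℕ) :
    (avoidingWords w n).Nonempty := by
  induction n with
  | zero => exact ⟨[], mem_avoidingWords.2 ⟨rfl, fun i h => hw i (List.infix_nil.1 h)⟩⟩
  | succ n ih =>
    have h := mul_card_avoidingWords_le hw hβ hsum n
    have hpos : (0 : ℝ) < (avoidingWords w n).card := by exact_mod_cast ih.card_pos
    exact Finset.card_pos.1 (by exact_mod_cast (mul_pos hβ hpos).trans_le h)

end ForbiddenWords

section Shift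

variable {m : ℕ}

lemma oneShift_iterate_apply (k : ℕ) (x : ℕ → Fin m) (j : ℕ) :
    (oneShift m)^[k] x j = x (k + j) := by
  induction k generalizing x with
  | zero => simp
  | succ k ih =>
    rw [Function.iterate_succ_apply, ih]
    exact congrArg x (by omega)

lemma isOpen_of_cylinder_subset {S : Set (ℕ → Fin m)} {n : ℕ}
    (h : ∀ x ∈ S, PiNat.cylinder x n ⊆ S) : IsOpen S :=
  isOpen_iff_forall_mem_open.2 fun x hx =>
    ⟨_, h x hx, PiNat.isOpen_cylinder (fun _ => Fin m) x n, PiNat.self_mem_cylinder x n⟩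

/-- The word formed by the first `n` letters of `x`. -/
def initialWord (x : ℕ → Fin m) (n : ℕ) : List (Fin m) := (List.range n).map x

lemma initialWord_eq_of_mem_cylinder {x y : ℕ → Fin m} {n : ℕ} (h : y ∈ PiNat.cylinder x n) :
    initialWord y n = initialWord x n :=
  List.map_congr_left fun i hi => h i (List.mem_range.1 hi)

lemma initialWord_add (x : ℕ → Fin m) (k n : ℕ) :
    initialWord x (k + n) = initialWord x k ++ initialWord ((oneShift m)^[k] x) n := by
  simp [initialWord, List.range_add, oneShift_iterate_apply]

/-- If a family of cylinders is sufficiently sparse, there is a point whose forward orbit avoids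
all of them. -/
lemma exists_iterate_notMem_cylinder {ι : Type*} (hm : 0 < m) (c : ι → ℕ → Fin m) (L : ι → ℕ)
    (hL : ∀ i, 0 < L i) {β : ℝ} (hβ : 0 < β)
    (hsum : ∀ S : Finset ι, ∑ i ∈ S, (β ^ L i)⁻¹ ≤ m / β - 1) :
    ∃ x, ∀ k i, (oneShift m)^[k] x ∉ PiNat.cylinder (c i) (L i) := by
  set w : ι → List (Fin m) := fun i => initialWord (c i) (L i) with hw_def
  have hlen : ∀ i, (w i).length = L i := fun i => by simp [hw_def, initialWord]
  have hw : ∀ i, w i ≠ [] := fun i => List.length_pos_iff.1 (by rw [hlen]; exact hL i)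
  have hne := avoidingWords_nonempty hw hβ (by simpa [hlen] using hsum)
  have hclosed : ∀ n, IsClosed {x : ℕ → Fin m | ∀ i, ¬ w i <:+: initialWord x n} := by
    refine fun n => ⟨isOpen_of_cylinder_subset (n := n) fun x hx y hy => ?_⟩
    simpa [initialWord_eq_of_mem_cylinder hy] using hx
  have hanti : ∀ n, {x : ℕ → Fin m | ∀ i, ¬ w i <:+: initialWord x (n + 1)} ⊆
      {x | ∀ i, ¬ w i <:+: initialWord x n} := by
    intro n x hx i hi
    refine hx i (hi.trans ?_)
    rw [initialWord_add]
    exact (List.prefix_append _ _).isInfix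
  have hnonempty : ∀ n, {x : ℕ → Fin m | ∀ i, ¬ w i <:+: initialWord x n}.Nonempty := by
    intro n
    obtain ⟨l, hl⟩ := hne n
    obtain ⟨hln, hl⟩ := mem_avoidingWords.1 hl
    refine ⟨fun j => l.getD j ⟨0, hm⟩, ?_⟩
    have : initialWord (fun j => l.getD j ⟨0, hm⟩) n = l := by
      apply List.ext_getElem
      · simp [initialWord, hln]
      · intro i h1 h2
        simp [initialWord, h2]
    simpa only [mem_ofPred_eq, this] using hl
  obtain ⟨x, hx⟩ := IsCompact.nonempty_iInter_of_sequence_nonempty_isCompact_isClosed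
    _ hanti hnonempty (hclosed 0).isCompact hclosed
  refine ⟨x, fun k i hk => mem_iInter.1 hx (k + L i) i ?_⟩
  rw [initialWord_add, initialWord_eq_of_mem_cylinder hk]
  exact (List.suffix_append _ _).isInfix

end Shift

section Bowen

variable [TopologicalSpace X] {f : X → X} {W U Y : Set X} {𝒜 : Finset (Set X)}

lemma exists_image_subset_of_lt_itinIndex {k : ℕ} (h : (k : ℕ∞) < itinIndex f W 𝒜 U) :
    ∃ A ∈ 𝒜, f^[k] '' (U ∩ W) ⊆ A := by
  obtain ⟨n, hn, hkn⟩ := lt_sSup_iff.1 h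
  exact hn k hkn

lemma le_itinIndex {n : ℕ∞}
    (h : ∀ k : ℕ, (k : ℕ∞) < n → ∃ A ∈ 𝒜, f^[k] '' (U ∩ W) ⊆ A) : n ≤ itinIndex f W 𝒜 U :=
  le_sSup h

lemma expWeight_le {d : ℝ} {n : ℕ∞} {k : ℕ} (h : (k : ℕ∞) ≤ n) :
    expWeight d n ≤ ENNReal.ofReal (Real.exp (-(d * k))) :=
  iInf₂_le k h

lemma expWeight_top {d : ℝ} (hd : 0 < d) : expWeight d ⊤ = 0 := by
  have ht : Tendsto (fun k : ℕ => ENNReal.ofReal (Real.exp (-(d * k)))) atTop (𝓝 0) := by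
    rw [← ENNReal.ofReal_zero]
    refine ENNReal.tendsto_ofReal (Real.tendsto_exp_atBot.comp ?_)
    exact tendsto_neg_atTop_atBot.comp (tendsto_natCast_atTop_atTop.const_mul_atTop hd)
  exact le_antisymm (ge_of_tendsto' ht fun k => expWeight_le le_top) zero_le

/-- The weight of a set of positive itinerary index is almost attained at a positive length. -/
lemma exists_exp_le_expWeight_add {d : ℝ} (hd : 0 ≤ d) {n : ℕ∞} (hn : 1 ≤ n) {δ : ℝ≥0∞}
    (hδ : δ ≠ 0) :
    ∃ k : ℕ, 0 < k ∧ (k : ℕ∞) ≤ n ∧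
      ENNReal.ofReal (Real.exp (-(d * k))) ≤ expWeight d n + δ := by
  have hfin : expWeight d n ≠ ⊤ :=
    ne_top_of_le_ne_top ENNReal.ofReal_ne_top (expWeight_le (k := 1) (by simpa using hn))
  have hlt := ENNReal.lt_add_right hfin hδ
  nth_rewrite 1 [expWeight] at hlt
  simp only [iInf_lt_iff] at hlt
  obtain ⟨k, hk, hlt⟩ := hlt
  refine ⟨max k 1, by simp, ?_, le_trans (ENNReal.ofReal_le_ofReal ?_) hlt.le⟩
  · rcases max_choice k 1 with h | h <;> rw [h]
    exacts [hk, by simpa using hn]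
  · gcongr
    exact le_max_left k 1

lemma exists_cover_of_bowenM_eq_zero {d : ℝ} (h : bowenM f W 𝒜 d Y = 0) (N : ℕ) {ε : ℝ≥0∞}
    (hε : 0 < ε) :
    ∃ 𝒰 : ℕ → Set X, (∀ i, IsOpen (𝒰 i)) ∧ Y ⊆ (⋃ i, 𝒰 i) ∧
      (∀ i, (N : ℕ∞) ≤ itinIndex f W 𝒜 (𝒰 i)) ∧
      ∑' i, expWeight d (itinIndex f W 𝒜 (𝒰 i)) < ε := by
  have hN := (ENNReal.iSup_eq_zero.1 h) N
  have hlt := hN.trans_lt hε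
  simp only [iInf_lt_iff] at hlt
  obtain ⟨𝒰, ⟨h1, h2, h3⟩, h4⟩ := hlt
  exact ⟨𝒰, h1, h2, h3, h4⟩

lemma bowenM_eq_zero_of_forall_exists_cover {d : ℝ}
    (h : ∀ N : ℕ, ∀ ε : ℝ≥0∞, 0 < ε → ∃ 𝒰 : ℕ → Set X, (∀ i, IsOpen (𝒰 i)) ∧
      Y ⊆ (⋃ i, 𝒰 i) ∧ (∀ i, (N : ℕ∞) ≤ itinIndex f W 𝒜 (𝒰 i)) ∧
      ∑' i, expWeight d (itinIndex f W 𝒜 (𝒰 i)) ≤ ε) : bowenM f W 𝒜 d Y = 0 := by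
  refine ENNReal.iSup_eq_zero.2 fun N => le_antisymm (le_of_forall_gt_imp_ge_of_dense ?_) zero_le
  intro ε hε
  obtain ⟨𝒰, h1, h2, h3, h4⟩ := h N ε hε
  exact (iInf₂_le 𝒰 ⟨h1, h2, h3⟩).trans h4

end Bowen

section ShiftEntropy

variable {m : ℕ}

/-- Every finite open cover of the full shift is refined by the cylinders of some length. -/
lemma exists_forall_cylinder_subset {𝒜 : Finset (Set (ℕ → Fin m))}
    (hopen : ∀ A ∈ 𝒜, IsOpen A) (hcover : univ ⊆ ⋃₀ (𝒜 : Set (Set (ℕ → Fin m)))) :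
    ∃ l : ℕ, ∀ x, ∃ A ∈ 𝒜, PiNat.cylinder x l ⊆ A := by
  set O : ℕ → Set (ℕ → Fin m) := fun l => {x | ∃ A ∈ 𝒜, PiNat.cylinder x l ⊆ A}
  have hO : ∀ l, IsOpen (O l) := fun l => isOpen_of_cylinder_subset (n := l) fun x hx y hy => by
    simpa only [O, mem_ofPred_eq, PiNat.mem_cylinder_iff_eq.1 hy] using hx
  have hmono : Monotone O := fun a b hab x ⟨A, hA, hx⟩ =>
    ⟨A, hA, (PiNat.cylinder_anti x hab).trans hx⟩
  have hunion : (univ : Set (ℕ → Fin m)) ⊆ ⋃ l, O l := by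
    intro x hx
    obtain ⟨A, hA, hxA⟩ := hcover hx
    obtain ⟨_, ⟨y, l, rfl⟩, hxy, hyA⟩ :=
      (PiNat.isTopologicalBasis_cylinders fun _ => Fin m).exists_subset_of_mem_open hxA
        (hopen A hA)
    exact mem_iUnion.2 ⟨l, A, hA, by rwa [PiNat.mem_cylinder_iff_eq.1 hxy]⟩
  obtain ⟨l, hl⟩ := isCompact_univ.elim_directed_cover O hO hunion hmono.directed_le
  exact ⟨l, fun x => hl (mem_univ x)⟩

lemma bowenM_oneShift_eq_zero (hm : 0 < m) {𝒜 : Finset (Set (ℕ → Fin m))}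
    (hopen : ∀ A ∈ 𝒜, IsOpen A) (hcover : univ ⊆ ⋃₀ (𝒜 : Set (Set (ℕ → Fin m))))
    {d : ℝ} (hd : Real.log m < d) (Y : Set (ℕ → Fin m)) :
    bowenM (oneShift m) univ 𝒜 d Y = 0 := by
  have hm' : (0 : ℝ) < m := by exact_mod_cast hm
  have hd0 : 0 < d := (Real.log_natCast_nonneg m).trans_lt hd
  obtain ⟨l, hl⟩ := exists_forall_cylinder_subset hopen hcover
  refine bowenM_eq_zero_of_forall_exists_cover fun N ε hε => ?_
  have hlim : Tendsto (fun n : ℕ => ENNReal.ofReal ((m : ℝ) ^ (n + l) * Real.exp (-(d * n))))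
      atTop (𝓝 0) := by
    have hq : (m : ℝ) * Real.exp (-d) < 1 := by
      rw [Real.exp_neg, ← div_eq_mul_inv, div_lt_one (Real.exp_pos d)]
      exact (Real.log_lt_iff_lt_exp hm').1 hd
    have h := (tendsto_pow_atTop_nhds_zero_of_lt_one (by positivity) hq).const_mul ((m : ℝ) ^ l)
    rw [← ENNReal.ofReal_zero]
    refine ENNReal.tendsto_ofReal ?_
    rw [mul_zero] at h
    refine h.congr fun n => ?_
    rw [mul_pow, ← Real.exp_nat_mul, pow_add]
    ring_nf
  obtain ⟨n, hnN, hn⟩ := ((eventually_ge_atTop N).and (hlim.eventually_le_const hε)).exists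
  set e := Fintype.equivFin (Fin (n + l) → Fin m)
  set 𝒰 : ℕ → Set (ℕ → Fin m) := fun i => {x | (e fun j => x j : ℕ) = i}
  have hcyl : ∀ i, ∀ x ∈ 𝒰 i, ∀ y ∈ 𝒰 i, y ∈ PiNat.cylinder x (n + l) := by
    intro i x hx y hy j hj
    have := e.injective (Fin.ext (hy.trans hx.symm))
    exact congrFun this ⟨j, hj⟩
  have hindex : ∀ i, (n : ℕ∞) ≤ itinIndex (oneShift m) univ 𝒜 (𝒰 i) := by
    refine fun i => le_itinIndex fun k hk => ?_
    have hk : k < n := by exact_mod_cast hk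
    rcases (𝒰 i).eq_empty_or_nonempty with h | ⟨x, hx⟩
    · obtain ⟨A, hA, -⟩ := hl fun _ => ⟨0, hm⟩
      exact ⟨A, hA, by simp [h]⟩
    · obtain ⟨A, hA, hxA⟩ := hl ((oneShift m)^[k] x)
      refine ⟨A, hA, ?_⟩
      rintro _ ⟨y, ⟨hy, -⟩, rfl⟩
      refine hxA fun j hj => ?_
      rw [oneShift_iterate_apply, oneShift_iterate_apply]
      exact hcyl i x hx y hy _ (by omega)
  refine ⟨𝒰, ?_, ?_, ?_, ?_⟩
  · refine fun i => isOpen_of_cylinder_subset (n := n + l) fun x hx y hy => ?_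
    have : (fun j : Fin (n + l) => y j) = fun j : Fin (n + l) => x j :=
      funext fun j => hy j j.2
    simpa only [𝒰, mem_ofPred_eq, this] using hx
  · exact fun x _ => mem_iUnion.2 ⟨_, rfl⟩
  · exact fun i => le_trans (by exact_mod_cast hnN) (hindex i)
  · have hzero : ∀ i ∉ Finset.range (Fintype.card (Fin (n + l) → Fin m)),
        expWeight d (itinIndex (oneShift m) univ 𝒜 (𝒰 i)) = 0 := by
      intro i hi
      have hempty : 𝒰 i = ∅ := by
        refine eq_empty_of_forall_notMem fun x hx => hi (Finset.mem_range.2 ?_)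
        exact hx ▸ (e fun j => x j).2
      have htop : itinIndex (oneShift m) univ 𝒜 (𝒰 i) = ⊤ := by
        obtain ⟨A, hA, -⟩ := hl fun _ => ⟨0, hm⟩
        exact top_le_iff.1 (le_itinIndex fun k _ => ⟨A, hA, by simp [hempty]⟩)
      rw [htop, expWeight_top hd0]
    rw [tsum_eq_sum hzero]
    refine le_trans (Finset.sum_le_sum fun i _ => expWeight_le (hindex i)) (le_trans ?_ hn)
    rw [ENNReal.ofReal_mul (by positivity)]
    simp [ENNReal.ofReal_pow]

lemma entropyCover_oneShift_le_log (hm : 0 < m) {𝒜 : Finset (Set (ℕ → Fin m))}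
    (hopen : ∀ A ∈ 𝒜, IsOpen A) (hcover : univ ⊆ ⋃₀ (𝒜 : Set (Set (ℕ → Fin m))))
    (Y : Set (ℕ → Fin m)) : entropyCover (oneShift m) univ 𝒜 Y ≤ Real.log m :=
  le_of_forall_gt_imp_ge_of_dense fun _ hd => csInf_le ⟨0, fun _ h => h.1⟩
    ⟨(Real.log_natCast_nonneg m).trans hd.le, bowenM_oneShift_eq_zero hm hopen hcover hd Y⟩

lemma iSup_entropyCover_oneShift_le_log (hm : 0 < m) (𝒜 : Finset (Set (ℕ → Fin m)))
    (Y : Set (ℕ → Fin m)) :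
    ⨆ _ : (∀ A ∈ 𝒜, IsOpen A) ∧ univ ⊆ ⋃₀ (𝒜 : Set (Set (ℕ → Fin m))),
      entropyCover (oneShift m) univ 𝒜 Y ≤ Real.log m :=
  Real.iSup_le (fun h => entropyCover_oneShift_le_log hm h.1 h.2 Y) (Real.log_natCast_nonneg m)

lemma entropyOn_oneShift_le_log (hm : 0 < m) (Y : Set (ℕ → Fin m)) :
    entropyOn (oneShift m) univ Y ≤ Real.log m :=
  ciSup_le fun 𝒜 => iSup_entropyCover_oneShift_le_log hm 𝒜 Y

lemma entropyCover_le_entropyOn_oneShift (hm : 0 < m) {𝒜 : Finset (Set (ℕ → Fin m))}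
    (hopen : ∀ A ∈ 𝒜, IsOpen A) (hcover : univ ⊆ ⋃₀ (𝒜 : Set (Set (ℕ → Fin m))))
    (Y : Set (ℕ → Fin m)) :
    entropyCover (oneShift m) univ 𝒜 Y ≤ entropyOn (oneShift m) univ Y := by
  refine le_trans (ciSup_pos (f := fun _ => entropyCover (oneShift m) univ 𝒜 Y)
    ⟨hopen, hcover⟩).ge (le_ciSup (f := fun ℬ : Finset (Set (ℕ → Fin m)) =>
      ⨆ _ : (∀ A ∈ ℬ, IsOpen A) ∧ univ ⊆ ⋃₀ (ℬ : Set (Set (ℕ → Fin m))),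
        entropyCover (oneShift m) univ ℬ Y) ⟨Real.log m, ?_⟩ 𝒜)
  rintro _ ⟨ℬ, rfl⟩
  exact iSup_entropyCover_oneShift_le_log hm ℬ Y

/-- The cover of the full shift by cylinders of length one. -/
def letterCover (m : ℕ) : Finset (Set (ℕ → Fin m)) := by
  classical
  exact Finset.univ.image fun a => {x | x 0 = a}

lemma mem_letterCover {S : Set (ℕ → Fin m)} :
    S ∈ letterCover m ↔ ∃ a, {x : ℕ → Fin m | x 0 = a} = S := by
  classical
  simp [letterCover]

lemma isOpen_of_mem_letterCover {S : Set (ℕ → Fin m)} (hS : S ∈ letterCover m) : IsOpen S := by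
  obtain ⟨a, rfl⟩ := mem_letterCover.1 hS
  exact (isOpen_discrete {a}).preimage (continuous_apply (A := fun _ => Fin m) 0)

lemma univ_subset_sUnion_letterCover :
    univ ⊆ ⋃₀ (letterCover m : Set (Set (ℕ → Fin m))) :=
  fun x _ => ⟨_, mem_letterCover.2 ⟨x 0, rfl⟩, rfl⟩

lemma subset_cylinder_of_le_itinIndex {U : Set (ℕ → Fin m)} {x : ℕ → Fin m} (hx : x ∈ U) {n : ℕ}
    (hn : (n : ℕ∞) ≤ itinIndex (oneShift m) univ (letterCover m) U) :
    U ⊆ PiNat.cylinder x n := by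
  intro y hy k hk
  obtain ⟨S, hS, hsub⟩ :=
    exists_image_subset_of_lt_itinIndex (lt_of_lt_of_le (by exact_mod_cast hk) hn)
  obtain ⟨a, rfl⟩ := mem_letterCover.1 hS
  have h : ∀ z ∈ U, z k = a := fun z hz => by
    simpa [oneShift_iterate_apply] using hsub ⟨z, ⟨hz, mem_univ z⟩, rfl⟩
  rw [h y hy, h x hx]

/-- Sets of vanishing Bowen measure are covered by open subsets of sparse families of cylinders. -/
lemma exists_cylinder_cover {d : ℝ} (hm : 0 < m) (hd : 0 ≤ d) {Y : Set (ℕ → Fin m)}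
    (hY : bowenM (oneShift m) univ (letterCover m) d Y = 0) {ε : ℝ} (hε : 0 < ε) :
    ∃ (𝒰 : ℕ → Set (ℕ → Fin m)) (c : ℕ → ℕ → Fin m) (L : ℕ → ℕ),
      (∀ i, IsOpen (𝒰 i)) ∧ Y ⊆ (⋃ i, 𝒰 i) ∧ (∀ i, 𝒰 i ⊆ PiNat.cylinder (c i) (L i)) ∧
      (∀ i, 0 < L i) ∧ ∀ S : Finset ℕ, ∑ i ∈ S, Real.exp (-(d * L i)) ≤ ε := by
  have hε2 : 0 < ENNReal.ofReal (ε / 2) := ENNReal.ofReal_pos.2 (half_pos hε)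
  obtain ⟨𝒰, hopen, hcov, hN, hsum⟩ := exists_cover_of_bowenM_eq_zero hY 1 hε2
  obtain ⟨δ, hδ, hδsum⟩ := ENNReal.exists_pos_sum_of_countable' hε2.ne' ℕ
  choose L hL0 hLn hL using fun i =>
    exists_exp_le_expWeight_add hd (by simpa using hN i) (hδ i).ne'
  have hc : ∀ i, ∃ c, 𝒰 i ⊆ PiNat.cylinder c (L i) := by
    intro i
    rcases (𝒰 i).eq_empty_or_nonempty with h | ⟨x, hx⟩
    · exact ⟨fun _ => ⟨0, hm⟩, by simp [h]⟩
    · exact ⟨x, subset_cylinder_of_le_itinIndex hx (hLn i)⟩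
  choose c hc using hc
  refine ⟨𝒰, c, L, hopen, hcov, hc, hL0, fun S => ?_⟩
  rw [← ENNReal.ofReal_le_ofReal_iff hε.le,
    ENNReal.ofReal_sum_of_nonneg fun i _ => (Real.exp_pos _).le]
  calc ∑ i ∈ S, ENNReal.ofReal (Real.exp (-(d * L i)))
      ≤ ∑' i, ENNReal.ofReal (Real.exp (-(d * L i))) := ENNReal.sum_le_tsum S
    _ ≤ ∑' i, (expWeight d (itinIndex (oneShift m) univ (letterCover m) (𝒰 i)) + δ i) :=
        ENNReal.tsum_le_tsum hL
    _ ≤ ENNReal.ofReal (ε / 2) + ENNReal.ofReal (ε / 2) := by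
        rw [ENNReal.tsum_add]
        exact add_le_add hsum.le hδsum.le
    _ = ENNReal.ofReal ε := by
        rw [← ENNReal.ofReal_add (half_pos hε).le (half_pos hε).le, add_halves]

/-- Two sets of vanishing Bowen measure below the critical exponent `log m` cannot be such that
one contains the limit exceptional set of the other. -/
lemma bowenM_ne_zero_of_limitExc_subset {d d' : ℝ} (hm : 0 < m) (hd : 0 ≤ d) (hd' : 0 ≤ d')
    (hdm : d < Real.log m) (hdm' : d' < Real.log m) {A Y : Set (ℕ → Fin m)}
    (hA : bowenM (oneShift m) univ (letterCover m) d A = 0)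
    (hY : limitExc (oneShift m) univ A ⊆ Y) :
    bowenM (oneShift m) univ (letterCover m) d' Y ≠ 0 := by
  intro hY0
  have hm' : (0 : ℝ) < m := by exact_mod_cast hm
  set s := max d d'
  have hgap : 0 < m / Real.exp s - 1 := by
    rw [sub_pos, one_lt_div (Real.exp_pos s)]
    exact (Real.lt_log_iff_exp_lt hm').1 (max_lt hdm hdm')
  obtain ⟨𝒰, c, L, hopen, hcov, hc, hL, hsum⟩ := exists_cylinder_cover hm hd hA (half_pos hgap)
  obtain ⟨𝒱, c', L', -, hcov', hc', hL', hsum'⟩ :=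
    exists_cylinder_cover hm hd' hY0 (half_pos hgap)
  have hweight : ∀ {t : ℝ}, t ≤ s → ∀ k : ℕ, (Real.exp s ^ k)⁻¹ ≤ Real.exp (-(t * k)) := by
    intro t ht k
    rw [← Real.exp_nat_mul, ← Real.exp_neg, mul_comm]
    gcongr
  obtain ⟨x, hx⟩ := exists_iterate_notMem_cylinder hm (Sum.elim c c') (Sum.elim L L')
    (by rintro (i | i); exacts [hL i, hL' i]) (Real.exp_pos s) (by
      intro S
      rw [← Finset.toLeft_disjSum_toRight (u := S), Finset.sum_disjSum]
      have h1 := (Finset.sum_le_sum fun i _ => hweight (le_max_left d d') (L i)).trans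
        (hsum S.toLeft)
      have h2 := (Finset.sum_le_sum fun i _ => hweight (le_max_right d d') (L' i)).trans
        (hsum' S.toRight)
      simp only [Sum.elim_inl, Sum.elim_inr]
      linarith)
  have hxI : x ∈ limitExc (oneShift m) univ A := by
    refine ⟨mem_univ x, eq_empty_of_forall_notMem ?_⟩
    rintro y ⟨⟨φ, -, hφ⟩, hyA⟩
    obtain ⟨i, hi⟩ := mem_iUnion.1 (hcov hyA)
    obtain ⟨n, hn⟩ := (hφ.eventually ((hopen i).mem_nhds hi)).exists
    exact hx (φ n) (Sum.inl i) (hc i hn)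
  obtain ⟨i, hi⟩ := mem_iUnion.1 (hcov' (hY hxI))
  exact hx 0 (Sum.inr i) (hc' i hi)

lemma log_le_entropyOn_of_limitExc_subset (hm : 0 < m) {A Y : Set (ℕ → Fin m)}
    (hA : entropyOn (oneShift m) univ A < Real.log m)
    (hY : limitExc (oneShift m) univ A ⊆ Y) : Real.log m ≤ entropyOn (oneShift m) univ Y := by
  have hopen : ∀ S ∈ letterCover m, IsOpen S := fun S hS => isOpen_of_mem_letterCover hS
  have hcover := univ_subset_sUnion_letterCover (m := m)
  have hne : ∀ Z, {d : ℝ | 0 ≤ d ∧ bowenM (oneShift m) univ (letterCover m) d Z = 0}.Nonempty :=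
    fun Z => ⟨Real.log m + 1, by linarith [Real.log_natCast_nonneg m],
      bowenM_oneShift_eq_zero hm hopen hcover (lt_add_one _) Z⟩
  obtain ⟨d, ⟨hd, hdA⟩, hdm⟩ := exists_lt_of_csInf_lt (hne A)
    ((entropyCover_le_entropyOn_oneShift hm hopen hcover A).trans_lt hA)
  refine le_trans (le_csInf (hne Y) ?_) (entropyCover_le_entropyOn_oneShift hm hopen hcover Y)
  rintro d' ⟨hd', hdY⟩
  by_contra! hlt
  exact bowenM_ne_zero_of_limitExc_subset hm hd hd' hdm hlt hdA hY hdY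

end ShiftEntropy

/-- **Theorem (Dolgopyat).** If `A ⊆ Σ_M^+` satisfies `h(σ⁺, A) < h(σ⁺)`, then the limit
`A`-exceptional set of the one-sided full shift has full topological entropy. -/
theorem shift_limitExc_full_entropy (m : ℕ) (hm : 0 < m) (A : Set (ℕ → Fin m))
    (hA : entropyOn (oneShift m) univ A < entropyOn (oneShift m) univ univ) :
    entropyOn (oneShift m) univ (limitExc (oneShift m) univ A)
      = entropyOn (oneShift m) univ univ := by
  have hA' := hA.trans_le (entropyOn_oneShift_le_log hm univ)
  exact ((entropyOn_oneShift_le_log hm _).antisymm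
      (log_le_entropyOn_of_limitExc_subset hm hA' subset_rfl)).trans
    ((log_le_entropyOn_of_limitExc_subset hm hA' (subset_univ _)).antisymm
      (entropyOn_oneShift_le_log hm _))

end ExceptionalSets
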